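/- arXiv:2002.10359 — 5 statements merged into one kernel-verified Lean document; each statement's English description precedes it below -/
import Mathlib

section
/- For all natural numbers ℓ, m, n and all complex matrices A₁, A₂ of size ℓ×m, the commutator X(A₁)·X(A₂) − X(A₂)·X(A₁) is the block diagonal matrix with diagonal blocks A₂A₁ᴴ − A₁A₂ᴴ (of size ℓ×ℓ), A₂ᴴA₁ − A₁ᴴA₂ (of size m×m) and 0 (of size n×n); moreover each of the two nonzero diagonal blocks is skew-Hermitian and the trace of the full commutator is 0. In other words, the bracket of two elements of 𝔪₁₂ lies in 𝔥₁ ⊕ 𝔥₂ ⊕ 𝔥₀. -/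
open Matrix

/-- The module `𝔪₁₂`: for `A : Matrix (Fin ℓ) (Fin m) ℂ`, the block matrix with `A`
in block position `(1,2)`, `-Aᴴ` in block position `(2,1)`, and zeros elsewhere. -/
def m12 (ℓ m n : ℕ) (A : Matrix (Fin ℓ) (Fin m) ℂ) :
    Matrix (Fin ℓ ⊕ (Fin m ⊕ Fin n)) (Fin ℓ ⊕ (Fin m ⊕ Fin n)) ℂ :=
  Matrix.of fun p q =>
    match p, q with
    | Sum.inl a, Sum.inr (Sum.inl b) => A a b
    | Sum.inr (Sum.inl a), Sum.inl b => (-Aᴴ) a b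
    | _, _ => 0

/-- The block diagonal matrix with diagonal blocks `P` (size `ℓ × ℓ`), `Q`
(size `m × m`) and `R` (size `n × n`). -/
def blkDiag (ℓ m n : ℕ) (P : Matrix (Fin ℓ) (Fin ℓ) ℂ) (Q : Matrix (Fin m) (Fin m) ℂ)
    (R : Matrix (Fin n) (Fin n) ℂ) :
    Matrix (Fin ℓ ⊕ (Fin m ⊕ Fin n)) (Fin ℓ ⊕ (Fin m ⊕ Fin n)) ℂ :=
  Matrix.of fun p q =>
    match p, q with
    | Sum.inl a, Sum.inl b => P a b
    | Sum.inr (Sum.inl a), Sum.inr (Sum.inl b) => Q a b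
    | Sum.inr (Sum.inr a), Sum.inr (Sum.inr b) => R a b
    | _, _ => 0

/-- The bracket of two elements of `𝔪₁₂` lies in `𝔥₁ ⊕ 𝔥₂ ⊕ 𝔥₀`:
`⁅X(A₁), X(A₂)⁆` is block diagonal with diagonal blocks `A₂A₁ᴴ - A₁A₂ᴴ`,
`A₂ᴴA₁ - A₁ᴴA₂` and `0`; both nonzero blocks are skew-Hermitian and the
commutator has trace `0`. -/
theorem bracket_m12_m12_mem_h
    (ℓ m n : ℕ) (A₁ A₂ : Matrix (Fin ℓ) (Fin m) ℂ) :
    m12 ℓ m n A₁ * m12 ℓ m n A₂ - m12 ℓ m n A₂ * m12 ℓ m n A₁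
        = blkDiag ℓ m n (A₂ * A₁ᴴ - A₁ * A₂ᴴ) (A₂ᴴ * A₁ - A₁ᴴ * A₂) 0
      ∧ (A₂ * A₁ᴴ - A₁ * A₂ᴴ)ᴴ = -(A₂ * A₁ᴴ - A₁ * A₂ᴴ)
      ∧ (A₂ᴴ * A₁ - A₁ᴴ * A₂)ᴴ = -(A₂ᴴ * A₁ - A₁ᴴ * A₂)
      ∧ (m12 ℓ m n A₁ * m12 ℓ m n A₂ - m12 ℓ m n A₂ * m12 ℓ m n A₁).trace = 0 := by
  refine ⟨?_, ?_, ?_, ?_⟩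
  · ext (a | a | a) (b | b | b) <;>
      simp [m12, blkDiag, Matrix.mul_apply, Fintype.sum_sum_type] <;> ring
  · simp [Matrix.conjTranspose_sub, Matrix.conjTranspose_mul]
  · simp [Matrix.conjTranspose_sub, Matrix.conjTranspose_mul]
  · -- The trace of a commutator vanishes because `tr (XY) = tr (YX)`.
    rw [Matrix.trace_sub, Matrix.trace_mul_comm, sub_self]
end

section
/- Let ℓ, N be natural numbers with 2 ≤ ℓ ≤ N, define the bilinear form B(X, Y) := −2N · Re(trace(X·Y)) on 𝔰𝔲(N), and let ι : 𝔰𝔲(ℓ) → 𝔰𝔲(N) be the top-left block embedding. Then for every basis (f_a)_{a=1,…,ℓ²−1} of the subalgebra ι(𝔰𝔲(ℓ)) ⊆ 𝔰𝔲(N) satisfying B(f_a, f_b) = δ_{ab} for all a, b, one has ∑_{a=1}^{ℓ²−1} ∑_{b=1}^{ℓ²−1} ∑_{c=1}^{ℓ²−1} B(⁅f_a, f_b⁆, f_c)² = ℓ(ℓ² − 1)/N. -/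
/-!
The heart of the argument is the completeness (Fierz) relation: if `P` is the projection onto the
first `ℓ` coordinates, then an orthonormal basis `f` of `ι(𝔰𝔲(ℓ))` satisfies
`∑ₐ (f a) i j * (f a) k l = -(1/2N) * (P i l * P k j - P i j * P k l / ℓ)`
(`completeness_entries`). Expanding an element of `ι(𝔰𝔲(ℓ))` in the basis gives
`∑ₐ tr(X fₐ) fₐ = -(1/2N) X`; this extends complex-linearly to all traceless `X` supported in the
block, since these are `A + iC` with `A`, `C` in `ι(𝔰𝔲(ℓ))`, and then to an arbitrary `M` by
replacing `M` with the traceless part of `P M P`. Testing against matrix units gives the relation.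

Parseval turns the sum over `c` into `-2N tr(⁅fₐ, f_b⁆²) = -4N (tr(fₐ f_b fₐ f_b) - tr(fₐ² f_b²))`.
Completeness evaluates `∑_b f_b M f_b` (`sum_sandwich`); with `M = fₐ` and `M = 1` this shows that
the sum over `b` and `c` is `ℓ/N` for each `a`, and there are `ℓ² - 1` values of `a`.
-/

open Matrix

/-- The negative of the Killing form of `𝔰𝔲(N)`:
`B(X, Y) = -2N · Re (trace (X * Y))`. -/
noncomputable def Bform (N : ℕ) (X Y : Matrix (Fin N) (Fin N) ℂ) : ℝ :=
  -(2 * (N : ℝ)) * ((X * Y).trace).re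

/-- Membership in the image of the top-left block embedding
`ι : 𝔰𝔲(ℓ) → 𝔰𝔲(N)`: a traceless skew-Hermitian `N × N` matrix supported in the
top-left `ℓ × ℓ` block. -/
def memSuTopLeft (ℓ N : ℕ) (X : Matrix (Fin N) (Fin N) ℂ) : Prop :=
  Xᴴ = -X ∧ X.trace = 0 ∧ ∀ i j : Fin N, (ℓ ≤ (i : ℕ) ∨ ℓ ≤ (j : ℕ)) → X i j = 0

/-- The projection onto the first `ℓ` coordinates of `ℂ^N`. -/
def topLeftProj (ℓ N : ℕ) : Matrix (Fin N) (Fin N) ℂ :=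
  Matrix.diagonal fun i => if (i : ℕ) < ℓ then 1 else 0

lemma topLeftProj_trace {ℓ N : ℕ} (hℓN : ℓ ≤ N) : (topLeftProj ℓ N).trace = ℓ := by
  have h : (Finset.univ.filter fun i : Fin N => (i : ℕ) < ℓ).card = ℓ := by
    rw [Fin.card_filter_val_lt]
    omega
  simp [topLeftProj, Matrix.trace_diagonal, h]

lemma topLeftProj_mul_self (ℓ N : ℕ) :
    topLeftProj ℓ N * topLeftProj ℓ N = topLeftProj ℓ N := by
  simp [topLeftProj, Matrix.diagonal_mul_diagonal]

lemma topLeftProj_mul {ℓ N : ℕ} {X : Matrix (Fin N) (Fin N) ℂ} (hX : memSuTopLeft ℓ N X) :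
    topLeftProj ℓ N * X = X := by
  ext i j
  rw [topLeftProj, Matrix.diagonal_mul]
  split_ifs with h
  · simp
  · simp [hX.2.2 i j (Or.inl (not_lt.mp h))]

lemma mul_topLeftProj {ℓ N : ℕ} {X : Matrix (Fin N) (Fin N) ℂ} (hX : memSuTopLeft ℓ N X) :
    X * topLeftProj ℓ N = X := by
  ext i j
  rw [topLeftProj, Matrix.mul_diagonal]
  split_ifs with h
  · simp
  · simp [hX.2.2 i j (Or.inr (not_lt.mp h))]

/-- The trace of a product of two skew-Hermitian matrices is real, so `B` needs no real part. -/
lemma trace_mul_eq_Bform {ℓ N : ℕ} (hN : (N : ℂ) ≠ 0) {X Y : Matrix (Fin N) (Fin N) ℂ}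
    (hX : memSuTopLeft ℓ N X) (hY : memSuTopLeft ℓ N Y) :
    (X * Y).trace = -(1 / (2 * N)) * (Bform N X Y : ℂ) := by
  have h : (starRingEnd ℂ) (X * Y).trace = (X * Y).trace := by
    have := Matrix.trace_conjTranspose (X * Y)
    rw [Matrix.conjTranspose_mul, hX.1, hY.1, neg_mul_neg, Matrix.trace_mul_comm] at this
    exact this.symm
  have h' := Complex.conj_eq_iff_re.mp h
  rw [Bform]
  push_cast
  rw [h']
  field_simp

lemma memSuTopLeft_commutator {ℓ N : ℕ} {X Y : Matrix (Fin N) (Fin N) ℂ}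
    (hX : memSuTopLeft ℓ N X) (hY : memSuTopLeft ℓ N Y) :
    memSuTopLeft ℓ N (X * Y - Y * X) := by
  refine ⟨?_, ?_, ?_⟩
  · rw [Matrix.conjTranspose_sub, Matrix.conjTranspose_mul, Matrix.conjTranspose_mul, hX.1, hY.1]
    simp
  · rw [Matrix.trace_sub, Matrix.trace_mul_comm, sub_self]
  · rintro i j (h | h)
    · simp [Matrix.mul_apply, hX.2.2 i _ (Or.inl h), hY.2.2 i _ (Or.inl h)]
    · simp [Matrix.mul_apply, hX.2.2 _ j (Or.inr h), hY.2.2 _ j (Or.inr h)]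

section Completeness

variable {ℓ N d : ℕ} {f : Fin d → Matrix (Fin N) (Fin N) ℂ}

lemma expand_of_mem (hN : (N : ℂ) ≠ 0)
    (hmem : ∀ a, memSuTopLeft ℓ N (f a))
    (hspan : ∀ X : Matrix (Fin N) (Fin N) ℂ,
      memSuTopLeft ℓ N X → X ∈ Submodule.span ℝ (Set.range f))
    (horth : ∀ a b, Bform N (f a) (f b) = if a = b then 1 else 0)
    {X : Matrix (Fin N) (Fin N) ℂ} (hX : memSuTopLeft ℓ N X) :
    ∑ a, (X * f a).trace • f a = (-(1 / (2 * N)) : ℂ) • X := by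
  obtain ⟨c, rfl⟩ := (Submodule.mem_span_range_iff_exists_fun ℝ).mp (hspan X hX)
  rw [Finset.smul_sum]
  refine Finset.sum_congr rfl fun b _ => ?_
  have : ((∑ a, c a • f a) * f b).trace = -(1 / (2 * N)) * (c b : ℂ) := by
    rw [Finset.sum_mul, Matrix.trace_sum]
    simp only [Matrix.smul_mul, Matrix.trace_smul, trace_mul_eq_Bform hN (hmem _) (hmem _), horth]
    rw [Finset.sum_eq_single b]
    · simp [mul_comm]
    · intro a _ hab
      simp [hab]
    · simp
  rw [this, mul_smul]
  rfl

/-- Parseval: the squared coordinates of `X` sum to `B(X, X)`. -/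
lemma parseval (hN : (N : ℂ) ≠ 0)
    (hmem : ∀ a, memSuTopLeft ℓ N (f a))
    (hspan : ∀ X : Matrix (Fin N) (Fin N) ℂ,
      memSuTopLeft ℓ N X → X ∈ Submodule.span ℝ (Set.range f))
    (horth : ∀ a b, Bform N (f a) (f b) = if a = b then 1 else 0)
    {X : Matrix (Fin N) (Fin N) ℂ} (hX : memSuTopLeft ℓ N X) :
    ((∑ c, (Bform N X (f c)) ^ 2 : ℝ) : ℂ) = -(2 * N) * (X * X).trace := by
  have h := congrArg (fun Y => (X * Y).trace) (expand_of_mem hN hmem hspan horth hX)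
  simp only [Finset.mul_sum, Matrix.trace_sum, Matrix.mul_smul, Matrix.trace_smul, smul_eq_mul,
    trace_mul_eq_Bform hN hX (hmem _)] at h
  have h3 : ∑ c, (-(1 / (2 * N)) * (Bform N X (f c) : ℂ)) * (-(1 / (2 * N)) * (Bform N X (f c) : ℂ))
      = (1 / (2 * N)) ^ 2 * ∑ c, (Bform N X (f c) : ℂ) ^ 2 := by
    rw [Finset.mul_sum]
    exact Finset.sum_congr rfl fun c _ => by ring
  rw [h3] at h
  push_cast
  field_simp at h
  linear_combination h

/-- Complex-linear extension of `expand_of_mem` to the complexification `𝔰𝔩(ℓ, ℂ)`. -/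
lemma expand_of_traceless (hN : (N : ℂ) ≠ 0)
    (hmem : ∀ a, memSuTopLeft ℓ N (f a))
    (hspan : ∀ X : Matrix (Fin N) (Fin N) ℂ,
      memSuTopLeft ℓ N X → X ∈ Submodule.span ℝ (Set.range f))
    (horth : ∀ a b, Bform N (f a) (f b) = if a = b then 1 else 0)
    {Y : Matrix (Fin N) (Fin N) ℂ} (htr : Y.trace = 0)
    (hsupp : ∀ i j : Fin N, (ℓ ≤ (i : ℕ) ∨ ℓ ≤ (j : ℕ)) → Y i j = 0) :
    ∑ a, (Y * f a).trace • f a = (-(1 / (2 * N)) : ℂ) • Y := by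
  have htr' : (Yᴴ).trace = 0 := by rw [Matrix.trace_conjTranspose, htr, star_zero]
  -- The skew-Hermitian parts of the decomposition `Y = A + iC`.
  have hA : memSuTopLeft ℓ N ((1 / 2 : ℂ) • (Y - Yᴴ)) := by
    refine ⟨?_, ?_, ?_⟩
    · ext i j
      simp
      ring
    · simp [htr, htr']
    · intro i j h
      simp [hsupp i j h, hsupp j i h.symm]
  have hC : memSuTopLeft ℓ N ((-(Complex.I / 2) : ℂ) • (Y + Yᴴ)) := by
    refine ⟨?_, ?_, ?_⟩
    · ext i j
      simp
      ring
    · simp [htr, htr']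
    · intro i j h
      simp [hsupp i j h, hsupp j i h.symm]
  have hY : Y = (1 / 2 : ℂ) • (Y - Yᴴ) + Complex.I • ((-(Complex.I / 2) : ℂ) • (Y + Yᴴ)) := by
    ext i j
    simp
    linear_combination (1 / 2) * (Y i j + (starRingEnd ℂ) (Y j i)) * Complex.I_mul_I
  have eA := expand_of_mem hN hmem hspan horth hA
  have eC := expand_of_mem hN hmem hspan horth hC
  generalize (1 / 2 : ℂ) • (Y - Yᴴ) = A at *
  generalize (-(Complex.I / 2) : ℂ) • (Y + Yᴴ) = C at *
  rw [hY]
  simp only [Matrix.add_mul, Matrix.smul_mul, Matrix.trace_add, Matrix.trace_smul, add_smul,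
    Finset.sum_add_distrib, smul_add, smul_assoc]
  rw [← Finset.smul_sum, eA, eC, smul_comm Complex.I]

lemma expand_general (h2 : 2 ≤ ℓ) (hℓN : ℓ ≤ N) (hN : (N : ℂ) ≠ 0)
    (hmem : ∀ a, memSuTopLeft ℓ N (f a))
    (hspan : ∀ X : Matrix (Fin N) (Fin N) ℂ,
      memSuTopLeft ℓ N X → X ∈ Submodule.span ℝ (Set.range f))
    (horth : ∀ a b, Bform N (f a) (f b) = if a = b then 1 else 0)
    (M : Matrix (Fin N) (Fin N) ℂ) :
    ∑ a, (M * f a).trace • f a = (-(1 / (2 * N)) : ℂ) •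
      (topLeftProj ℓ N * M * topLeftProj ℓ N
        - ((topLeftProj ℓ N * M * topLeftProj ℓ N).trace / ℓ) • topLeftProj ℓ N) := by
  have hℓ : (ℓ : ℂ) ≠ 0 := by
    norm_cast
    omega
  rw [← expand_of_traceless hN hmem hspan horth]
  · refine Finset.sum_congr rfl fun a _ => ?_
    congr 1
    rw [Matrix.sub_mul, Matrix.trace_sub, Matrix.smul_mul, topLeftProj_mul (hmem a),
      Matrix.trace_smul, (hmem a).2.1, Matrix.mul_assoc, topLeftProj_mul (hmem a),
      Matrix.mul_assoc, Matrix.trace_mul_comm (topLeftProj ℓ N), Matrix.mul_assoc,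
      mul_topLeftProj (hmem a)]
    simp
  · rw [Matrix.trace_sub, Matrix.trace_smul, topLeftProj_trace hℓN, smul_eq_mul]
    field_simp
    simp
  · rintro i j (h | h)
    · simp [topLeftProj, Matrix.diagonal_mul, Matrix.mul_diagonal, Matrix.diagonal_apply,
        not_lt.mpr h]
    · have : ∀ k : Fin N, k = j → ¬ (k : ℕ) < ℓ := by
        rintro k rfl
        exact not_lt.mpr h
      simp [topLeftProj, Matrix.diagonal_mul, Matrix.mul_diagonal, Matrix.diagonal_apply,
        not_lt.mpr h]
      grind

lemma completeness_entries (h2 : 2 ≤ ℓ) (hℓN : ℓ ≤ N) (hN : (N : ℂ) ≠ 0)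
    (hmem : ∀ a, memSuTopLeft ℓ N (f a))
    (hspan : ∀ X : Matrix (Fin N) (Fin N) ℂ,
      memSuTopLeft ℓ N X → X ∈ Submodule.span ℝ (Set.range f))
    (horth : ∀ a b, Bform N (f a) (f b) = if a = b then 1 else 0) (i j k l : Fin N) :
    ∑ a, f a i j * f a k l = -(1 / (2 * N)) *
      (topLeftProj ℓ N i l * topLeftProj ℓ N k j
        - topLeftProj ℓ N i j * topLeftProj ℓ N k l / ℓ) := by
  have h := congrFun (congrFun (expand_general h2 hℓN hN hmem hspan horth
    (Matrix.single l k 1)) i) j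
  have e1 : ∀ X : Matrix (Fin N) (Fin N) ℂ, (Matrix.single l k 1 * X).trace = X k l := by
    intro X
    simp [Matrix.trace_single_mul]
  have e2 : (topLeftProj ℓ N * Matrix.single l k (1 : ℂ) * topLeftProj ℓ N) i j
      = topLeftProj ℓ N i l * topLeftProj ℓ N k j := by
    rw [Matrix.mul_assoc, Matrix.mul_apply, Finset.sum_eq_single l]
    · simp
    · intro x _ hx
      simp [hx]
    · simp
  have e3 : (topLeftProj ℓ N * Matrix.single l k 1 * topLeftProj ℓ N).trace
      = topLeftProj ℓ N k l := by
    rw [Matrix.mul_assoc, Matrix.trace_mul_comm, Matrix.mul_assoc, topLeftProj_mul_self, e1]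
  simp only [e1, e3, Matrix.sum_apply, Matrix.smul_apply, Matrix.sub_apply, e2, smul_eq_mul] at h
  calc _ = ∑ a, f a k l * f a i j := Finset.sum_congr rfl fun a _ => mul_comm _ _
    _ = _ := by
      rw [h]
      ring

lemma sum_sandwich (h2 : 2 ≤ ℓ) (hℓN : ℓ ≤ N) (hN : (N : ℂ) ≠ 0)
    (hmem : ∀ a, memSuTopLeft ℓ N (f a))
    (hspan : ∀ X : Matrix (Fin N) (Fin N) ℂ,
      memSuTopLeft ℓ N X → X ∈ Submodule.span ℝ (Set.range f))
    (horth : ∀ a b, Bform N (f a) (f b) = if a = b then 1 else 0)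
    (M : Matrix (Fin N) (Fin N) ℂ) :
    ∑ b, f b * M * f b = (-(1 / (2 * N)) : ℂ) •
      ((topLeftProj ℓ N * M).trace • topLeftProj ℓ N
        - (1 / ℓ : ℂ) • (topLeftProj ℓ N * M * topLeftProj ℓ N)) := by
  ext i l
  have hc := completeness_entries h2 hℓN hN hmem hspan horth
  simp only [Matrix.sum_apply, Matrix.mul_apply, Matrix.smul_apply, Matrix.sub_apply,
    smul_eq_mul, Matrix.trace, Matrix.diag_apply, Finset.sum_mul]
  rw [Finset.sum_comm]
  calc _ = ∑ k, ∑ j, M j k * ∑ b, f b i j * f b k l := by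
        refine Finset.sum_congr rfl fun k _ => ?_
        rw [Finset.sum_comm]
        refine Finset.sum_congr rfl fun j _ => ?_
        rw [Finset.mul_sum]
        exact Finset.sum_congr rfl fun b _ => by ring
    _ = _ := by
        simp only [hc, Finset.mul_sum, ← Finset.sum_sub_distrib]
        refine Finset.sum_congr rfl fun k _ => ?_
        refine Finset.sum_congr rfl fun j _ => ?_
        ring

lemma sum_over_b_c (h2 : 2 ≤ ℓ) (hℓN : ℓ ≤ N) (hN : (N : ℂ) ≠ 0)
    (hmem : ∀ a, memSuTopLeft ℓ N (f a))
    (hspan : ∀ X : Matrix (Fin N) (Fin N) ℂ,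
      memSuTopLeft ℓ N X → X ∈ Submodule.span ℝ (Set.range f))
    (horth : ∀ a b, Bform N (f a) (f b) = if a = b then 1 else 0) (a : Fin d) :
    ∑ b, ∑ c, (Bform N (f a * f b - f b * f a) (f c)) ^ 2 = (ℓ : ℝ) / N := by
  have hℓ : (ℓ : ℂ) ≠ 0 := by
    norm_cast
    omega
  have hs := sum_sandwich h2 hℓN hN hmem hspan horth
  have haa : (f a * f a).trace = -(1 / (2 * N)) := by
    rw [trace_mul_eq_Bform hN (hmem a) (hmem a), horth]
    simp
  have s1 : ∑ b, (f a * (f b * f a * f b)).trace = (1 / (2 * N * ℓ)) * -(1 / (2 * N)) := by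
    rw [← Matrix.trace_sum, ← Finset.mul_sum, hs, topLeftProj_mul (hmem a),
      mul_topLeftProj (hmem a), (hmem a).2.1, zero_smul, zero_sub, Matrix.mul_smul,
      Matrix.mul_neg, Matrix.mul_smul, Matrix.trace_smul, Matrix.trace_neg, Matrix.trace_smul, haa,
      smul_eq_mul, smul_eq_mul]
    field_simp
  have s2 : ∑ b, (f a * f a * (f b * 1 * f b)).trace
      = -(1 / (2 * (N : ℂ))) * (ℓ - 1 / ℓ) * -(1 / (2 * N)) := by
    rw [← Matrix.trace_sum, ← Finset.mul_sum, hs, Matrix.mul_one, topLeftProj_mul_self,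
      topLeftProj_trace hℓN, ← sub_smul, Matrix.mul_smul, Matrix.mul_smul, Matrix.mul_assoc,
      mul_topLeftProj (hmem a), Matrix.trace_smul, Matrix.trace_smul, haa, smul_eq_mul,
      smul_eq_mul]
    ring
  have key : ∀ b, ((f a * f b - f b * f a) * (f a * f b - f b * f a)).trace
      = 2 * (f a * (f b * f a * f b)).trace - 2 * (f a * f a * (f b * 1 * f b)).trace := by
    intro b
    have t1 : (f b * f a * (f b * f a)).trace = (f a * (f b * f a * f b)).trace := by
      rw [Matrix.trace_mul_comm (f a)]
      simp only [Matrix.mul_assoc]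
    have t2 : (f b * f a * (f a * f b)).trace = (f a * f a * (f b * f b)).trace := by
      rw [Matrix.mul_assoc, Matrix.trace_mul_comm (f b)]
      simp only [Matrix.mul_assoc]
    have t3 : (f a * f b * (f b * f a)).trace = (f a * f a * (f b * f b)).trace := by
      rw [Matrix.mul_assoc (f a) (f a), Matrix.trace_mul_comm (f a) (f a * _)]
      rw [← Matrix.mul_assoc (f a * f b), Matrix.mul_assoc (f a) (f b) (f b)]
    have t4 : (f a * f b * (f a * f b)).trace = (f a * (f b * f a * f b)).trace := by
      simp only [Matrix.mul_assoc]
    rw [Matrix.sub_mul, Matrix.mul_sub, Matrix.mul_sub, Matrix.trace_sub, Matrix.trace_sub,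
      Matrix.trace_sub, t1, t2, t3, t4, Matrix.mul_one]
    ring
  apply Complex.ofReal_injective
  rw [Complex.ofReal_sum]
  simp only [parseval hN hmem hspan horth (memSuTopLeft_commutator (hmem a) (hmem _)), key]
  rw [← Finset.mul_sum, Finset.sum_sub_distrib, ← Finset.mul_sum, ← Finset.mul_sum, s1, s2]
  push_cast
  field_simp
  ring

end Completeness

/-- Lemma 3.4, the structure constants `[1 // 11] = ℓ(ℓ² - 1)/N`: for any basis
`(f_a)` of the subalgebra `ι(𝔰𝔲(ℓ)) ⊆ 𝔰𝔲(N)` which is orthonormal with respect to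
`B(X,Y) = -2N·Re(trace(XY))`, the sum of the squares
`∑ₐ ∑_b ∑_c B(⁅f_a, f_b⁆, f_c)²` equals `ℓ(ℓ² - 1)/N`. -/
theorem sum_sq_structure_constants_su_topLeft
    (ℓ N : ℕ) (h2 : 2 ≤ ℓ) (hℓN : ℓ ≤ N)
    (f : Fin (ℓ ^ 2 - 1) → Matrix (Fin N) (Fin N) ℂ)
    (hmem : ∀ a, memSuTopLeft ℓ N (f a))
    (hindep : LinearIndependent ℝ f)
    (hspan : ∀ X : Matrix (Fin N) (Fin N) ℂ,
      memSuTopLeft ℓ N X → X ∈ Submodule.span ℝ (Set.range f))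
    (horth : ∀ a b, Bform N (f a) (f b) = if a = b then 1 else 0) :
    ∑ a : Fin (ℓ ^ 2 - 1), ∑ b : Fin (ℓ ^ 2 - 1), ∑ c : Fin (ℓ ^ 2 - 1),
      (Bform N (f a * f b - f b * f a) (f c)) ^ 2
      = (ℓ : ℝ) * ((ℓ : ℝ) ^ 2 - 1) / (N : ℝ) := by
  have hN : (N : ℂ) ≠ 0 := by
    norm_cast
    omega
  have h1 : 1 ≤ ℓ ^ 2 := Nat.one_le_pow _ _ (by omega)
  simp only [sum_over_b_c h2 hℓN hN hmem hspan horth, Finset.sum_const, Finset.card_univ,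
    Fintype.card_fin, nsmul_eq_mul]
  rw [Nat.cast_sub h1]
  push_cast
  ring
end

section
/- The polynomial 2048409x¹⁶ − 12016026x¹⁵ + 33986766x¹⁴ − 64594134x¹³ + 106943061x¹² − 161713368x¹¹ + 193524028x¹⁰ − 175182968x⁹ + 135191836x⁸ − 99593120x⁷ + 64876480x⁶ − 34635680x⁵ + 15920560x⁴ − 6174080x³ + 1785280x² − 412800x + 72000 has no real roots; equivalently, its value is strictly positive for every real x. -/
/-!
Write `p` for the polynomial. Its minimum lies near `x = 0.725`, so the line is cut at `0` and
at the nearby fraction `8 / 11`, and on each piece a coordinate is used in which every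
coefficient of `p` is positive.

* For `x ≤ 0` the signs of the coefficients of `p` alternate, so every term is nonnegative.
* For `0 < x < 8 / 11` put `w = 8 - 11 * x > 0` and homogenize with `8 = 11 * x + w`: a multiple
  of `p x` is a form of degree 16 in `x` and `w` with positive coefficients.
* For `8 / 11 ≤ x` put `u = 11 * x - 8 ≥ 0`: the Taylor expansion of `p` at `8 / 11` has
  positive coefficients.
-/

/-- The degree-16 factor of the resultant `Res(F₁, F₅)` arising in the analysis of
left-invariant Einstein metrics on `SU(4)` has no real roots: it is strictly
positive for every real `x`. -/
theorem su4_resultant_factor_pos (x : ℝ) :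
    0 < 2048409 * x ^ 16 - 12016026 * x ^ 15 + 33986766 * x ^ 14
        - 64594134 * x ^ 13 + 106943061 * x ^ 12 - 161713368 * x ^ 11
        + 193524028 * x ^ 10 - 175182968 * x ^ 9 + 135191836 * x ^ 8
        - 99593120 * x ^ 7 + 64876480 * x ^ 6 - 34635680 * x ^ 5
        + 15920560 * x ^ 4 - 6174080 * x ^ 3 + 1785280 * x ^ 2
        - 412800 * x + 72000 := by
  rcases le_or_gt x 0 with h | h
  · obtain ⟨y, rfl⟩ : ∃ y, x = -y := ⟨-x, (neg_neg x).symm⟩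
    have hy : 0 ≤ y := by linarith
    ring_nf
    positivity
  rcases lt_or_ge x (8 / 11) with h' | h'
  · obtain ⟨w, hw⟩ : ∃ w, w = 8 - 11 * x := ⟨_, rfl⟩
    have hw0 : 0 < w := by linarith
    have key : 0 < 1125 * w ^ 16
        + 146400 * x ^ 1 * w ^ 15
        + 9606280 * x ^ 2 * w ^ 14
        + 408492480 * x ^ 3 * w ^ 13
        + 12341715900 * x ^ 4 * w ^ 12
        + 275715701920 * x ^ 5 * w ^ 11
        + 4623737933400 * x ^ 6 * w ^ 10
        + 58149661785600 * x ^ 7 * w ^ 9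
        + 542080679843854 * x ^ 8 * w ^ 8
        + 3679752598507296 * x ^ 9 * w ^ 7
        + 17847469591736568 * x ^ 10 * w ^ 6
        + 60735707682677952 * x ^ 11 * w ^ 5
        + 141726894696287004 * x ^ 12 * w ^ 4
        + 212829821317456992 * x ^ 13 * w ^ 3
        + 170109973116413352 * x ^ 14 * w ^ 2
        + 4562352042678144 * x ^ 15 * w ^ 1
        + 18068944858741557 * x ^ 16 := by
      positivity
    -- the form equals `8 ^ 16 / 64 = 4398046511104` times `p x`
    rw [hw] at key
    linear_combination (1 / 4398046511104) * key
  · obtain ⟨u, hu⟩ : ∃ u, u = 11 * x - 8 := ⟨_, rfl⟩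
    have hu0 : 0 ≤ u := by linarith
    have key : 0 < 1156412470959459648
        + 1911337962163242624 * u ^ 1
        + 21998792043093108672 * u ^ 2
        + 1217361849658872192 * u ^ 3
        + 4305638885101759920 * u ^ 4
        + 1027175442583632672 * u ^ 5
        + 135063470060823744 * u ^ 6
        + 49181105187752736 * u ^ 7
        + 15100933058437468 * u ^ 8
        + 2419921761565528 * u ^ 9
        + 230139417847900 * u ^ 10
        + 15688733736984 * u ^ 11
        + 1053512852469 * u ^ 12
        + 73709047038 * u ^ 13
        + 3983025486 * u ^ 14
        + 130020066 * u ^ 15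
        + 2048409 * u ^ 16 := by
      positivity
    -- the expansion equals `11 ^ 16` times `p x`
    rw [hu] at key
    linear_combination (1 / 11 ^ 16) * key
end

section
/- For all real numbers m ≥ 8 and n ≥ m/2, one has B_{n,m}(3/2) < 0. -/
/-!
Write `m = 8 + a` and `n = m / 2 + t` with `a, t ≥ 0`. Expanding `B_{n,m}(3/2)` as a polynomial
in `t` and then in `a`, every coefficient is nonpositive and the constant term is `-68599`, so the
value is negative.
-/

/-- The obstruction polynomial `B_{n,m}(x)` for diagonal invariant Einstein metrics
on the complex Stiefel manifold `V_{2m}ℂ^{2m+n}`. -/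
def Bnm (m n x : ℝ) : ℝ :=
  16 * m ^ 5 * n * x ^ 2 - 48 * m ^ 5 * n * x + 40 * m ^ 5 * n
    + 20 * m ^ 4 * n ^ 2 * x ^ 4 - 64 * m ^ 4 * n ^ 2 * x ^ 3
    + 68 * m ^ 4 * n ^ 2 * x ^ 2 - 24 * m ^ 4 * n ^ 2 * x + 20 * m ^ 4
    + 8 * m ^ 3 * n ^ 3 * x ^ 6 - 28 * m ^ 3 * n ^ 3 * x ^ 5
    + 42 * m ^ 3 * n ^ 3 * x ^ 4 - 32 * m ^ 3 * n ^ 3 * x ^ 3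
    + 56 * m ^ 3 * n * x ^ 2 - 32 * m ^ 3 * n * x - 16 * m ^ 3 * n
    + m ^ 2 * n ^ 4 * x ^ 8 - 4 * m ^ 2 * n ^ 4 * x ^ 7
    + 11 * m ^ 2 * n ^ 4 * x ^ 6 - 14 * m ^ 2 * n ^ 4 * x ^ 5
    + 41 * m ^ 2 * n ^ 2 * x ^ 4 - 32 * m ^ 2 * n ^ 2 * x ^ 3
    - 8 * m ^ 2 * n ^ 2 * x ^ 2 - 16 * m ^ 2 * n ^ 2 * x - 8 * m ^ 2
    + m * n ^ 5 * x ^ 8 - 2 * m * n ^ 5 * x ^ 7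
    + 11 * m * n ^ 3 * x ^ 6 - 8 * m * n ^ 3 * x ^ 5 - 16 * m * n ^ 3 * x ^ 3
    - 16 * m * n * x ^ 2 + 16 * m * n * x + 8 * m * n
    + n ^ 4 * x ^ 8 - 4 * n ^ 4 * x ^ 5 - 4 * n ^ 2 * x ^ 4
    + 4 * n ^ 2 * x ^ 2 + 8 * n ^ 2 * x + 4

/-- For all real `m ≥ 8` and `n ≥ m/2`, one has `B_{n,m}(3/2) < 0`. -/
theorem Bnm_at_three_halves_neg (m n : ℝ) (hm : 8 ≤ m) (hn : m / 2 ≤ n) :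
    Bnm m n (3 / 2) < 0 := by
  obtain ⟨a, rfl⟩ : ∃ a, m = 8 + a := ⟨m - 8, by ring⟩
  obtain ⟨t, rfl⟩ : ∃ t, n = (8 + a) / 2 + t := ⟨n - (8 + a) / 2, by ring⟩
  have ha : 0 ≤ a := by linarith
  have ht : 0 ≤ t := by linarith
  have expansion : Bnm (8 + a) ((8 + a) / 2 + t) (3 / 2) =
      -((68599 + 238289 / 2 * a + 1734239 / 32 * a ^ 2 + 1427975 / 128 * a ^ 3
            + 4827975 / 4096 * a ^ 4 + 31875 / 512 * a ^ 5 + 10625 / 8192 * a ^ 6)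
        + (622175 + 3238873 / 8 * a + 6669847 / 64 * a ^ 2 + 6797949 / 512 * a ^ 3
            + 428875 / 512 * a ^ 4 + 85775 / 4096 * a ^ 5) * t
        + (2238099 / 8 + 4510137 / 32 * a + 13598265 / 512 * a ^ 2
            + 71001 / 32 * a ^ 3 + 71001 / 1024 * a ^ 4) * t ^ 2
        + (701865 / 16 + 2105865 / 128 * a + 131625 / 64 * a ^ 2 + 43875 / 512 * a ^ 3) * t ^ 3
        + (739935 / 256 + 23085 / 32 * a + 23085 / 512 * a ^ 2) * t ^ 4
        + (2187 / 32 + 2187 / 256 * a) * t ^ 5) := by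
    unfold Bnm
    ring
  rw [expansion, neg_lt_zero]
  positivity
end

section
/- For all real numbers m ≥ 8 and n ≥ m/2, the polynomial x ↦ B_{n,m}(x) has at least two roots in the open interval (0, 2): there exist real numbers α and β with 0 < α < 3/2 < β < 2 such that B_{n,m}(α) = 0 and B_{n,m}(β) = 0. -/
/-- Nonnegative parameters `s, t` in which the values of `B` at `0`, `3/2` and `2` have
coefficients of constant sign. -/
theorem exists_shift {m n : ℝ} (hm : 8 ≤ m) (hn : m / 2 ≤ n) :
    ∃ s t : ℝ, 0 ≤ s ∧ 0 ≤ t ∧ m = 8 + s ∧ n = (8 + s) / 2 + t :=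
  ⟨m - 8, n - m / 2, by linarith, by linarith, by ring, by ring⟩

theorem Bnm_zero_pos {m n : ℝ} (hm : 8 ≤ m) (hn : m / 2 ≤ n) : 0 < Bnm m n 0 := by
  obtain ⟨s, t, hs, ht, rfl, rfl⟩ := exists_shift hm hn
  unfold Bnm
  ring_nf
  positivity

theorem Bnm_three_halves_neg {m n : ℝ} (hm : 8 ≤ m) (hn : m / 2 ≤ n) :
    Bnm m n (3 / 2) < 0 := by
  obtain ⟨s, t, hs, ht, rfl, rfl⟩ := exists_shift hm hn
  rw [← neg_pos]
  unfold Bnm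
  ring_nf
  positivity

theorem Bnm_two_pos {m n : ℝ} (hm : 8 ≤ m) (hn : m / 2 ≤ n) : 0 < Bnm m n 2 := by
  obtain ⟨s, t, hs, ht, rfl, rfl⟩ := exists_shift hm hn
  unfold Bnm
  ring_nf
  positivity

/-- For all real `m ≥ 8` and `n ≥ m/2`, the polynomial `B_{n,m}` has at least two
roots in the open interval `(0, 2)`: one in `(0, 3/2)` and one in `(3/2, 2)`. -/
theorem Bnm_two_roots (m n : ℝ) (hm : 8 ≤ m) (hn : m / 2 ≤ n) :
    ∃ α β : ℝ, 0 < α ∧ α < 3 / 2 ∧ 3 / 2 < β ∧ β < 2 ∧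
      Bnm m n α = 0 ∧ Bnm m n β = 0 := by
  have hcont : Continuous (Bnm m n) := by
    unfold Bnm
    fun_prop
  have hmid := Bnm_three_halves_neg hm hn
  obtain ⟨α, ⟨hα₀, hα₁⟩, hα⟩ := intermediate_value_Ioo' (by norm_num : (0 : ℝ) ≤ 3 / 2)
    hcont.continuousOn ⟨hmid, Bnm_zero_pos hm hn⟩
  obtain ⟨β, ⟨hβ₀, hβ₁⟩, hβ⟩ := intermediate_value_Ioo (by norm_num : (3 / 2 : ℝ) ≤ 2)
    hcont.continuousOn ⟨hmid, Bnm_two_pos hm hn⟩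
  exact ⟨α, β, hα₀, hα₁, hβ₀, hβ₁, hα, hβ⟩
end
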